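/- Define w_i = c_i + ∑_{j:(i,j)∈E}(q²_{ij} − q¹_{ij}) and φ(P)=∑_{i∈P} w_i. Assume w_i ≥ 0 for all i∈V and K := ∑_{(i,j)∈E}(2q¹_{ij} − q²_{ij}) ≥ 0. Let P° be a vertex cover minimizing φ over all vertex covers, assume φ(P°) > 0, and set δ = K/φ(P°). If P* is a vertex cover with φ(P*) ≤ ε·φ(P°) for some ε ≥ 1, then f(P*) ≤ ((ε + δ)/(1 + δ)) · f(P°), where P° also minimizes f over all vertex covers; i.e., an ε-approximate vertex cover for MWVCP with weights w is an (ε+δ)/(1+δ)-approximate solution for VCPNEW. -/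

import Mathlib

open Finset

variable {V : Type*} [Fintype V] [DecidableEq V]

/-- Edges of `E` with no endpoint in `U`. -/
def E0 (E : Finset (V × V)) (U : Finset V) : Finset (V × V) :=
  E.filter fun e => e.1 ∉ U ∧ e.2 ∉ U

/-- Edges of `E` with exactly one endpoint in `U`. -/
def E1 (E : Finset (V × V)) (U : Finset V) : Finset (V × V) :=
  E.filter fun e => (e.1 ∈ U ∧ e.2 ∉ U) ∨ (e.1 ∉ U ∧ e.2 ∈ U)

/-- Edges of `E` with both endpoints in `U`. -/
def E2 (E : Finset (V × V)) (U : Finset V) : Finset (V × V) :=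
  E.filter fun e => e.1 ∈ U ∧ e.2 ∈ U

/-- Edges of `E` incident to vertex `i`. -/
def incident (E : Finset (V × V)) (i : V) : Finset (V × V) :=
  E.filter fun e => e.1 = i ∨ e.2 = i

/-- The GVC objective `f`. -/
def gvcObj (E : Finset (V × V)) (c : V → ℝ) (q0 q1 q2 : V × V → ℝ) (U : Finset V) : ℝ :=
  ∑ i ∈ U, c i + ∑ e ∈ E0 E U, q0 e + ∑ e ∈ E1 E U, q1 e + ∑ e ∈ E2 E U, q2 e
/-- `P` is a vertex cover of the graph with edge set `E`. -/
def IsVC (E : Finset (V × V)) (P : Finset V) : Prop :=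
  ∀ e ∈ E, e.1 ∈ P ∨ e.2 ∈ P

/-- The VCPNEW objective. -/
def vcObj (E : Finset (V × V)) (c : V → ℝ) (q1 q2 : V × V → ℝ) (P : Finset V) : ℝ :=
  ∑ i ∈ P, c i + ∑ e ∈ E1 E P, q1 e + ∑ e ∈ E2 E P, q2 e

/-! Swapping the order of summation in `∑ i ∈ P, w i` counts the edge weight `q2 - q1` once on the
edges with one end in `P` and twice on those with both ends in `P`. Adding `2 * q1 - q2` then leaves
`q1` on the former and `q2` on the latter, and a cover has no other edges: `f = φ + K` on vertex
covers. So `f` and `φ` have the same minimizers, and `φ(P*) ≤ ε φ(P0)` becomes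
`f(P*) ≤ ε φ(P0) + K`, whose right-hand side is `(ε + δ) φ(P0)`, while `f(P0) = (1 + δ) φ(P0)`. -/

section

omit [Fintype V]

/-- The vertex weight `w_i` of the minimum-weight vertex cover problem equivalent to VCPNEW, the
edge costs being transferred to the vertices. -/
def mwvcpWeight (E : Finset (V × V)) (c : V → ℝ) (q1 q2 : V × V → ℝ) (i : V) : ℝ :=
  c i + ∑ e ∈ incident E i, (q2 e - q1 e)

/-- The constant `K` by which the VCPNEW objective of a vertex cover exceeds its total
`mwvcpWeight`. -/
def mwvcpConst (E : Finset (V × V)) (q1 q2 : V × V → ℝ) : ℝ :=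
  ∑ e ∈ E, (2 * q1 e - q2 e)

section EdgeSums

variable {M : Type*} [AddCommMonoid M]

theorem sum_incident {E : Finset (V × V)} (hE : ∀ e ∈ E, e.1 ≠ e.2) (g : V × V → M) (i : V) :
    ∑ e ∈ incident E i, g e = ∑ e ∈ E with e.1 = i, g e + ∑ e ∈ E with e.2 = i, g e := by
  have hdisj : Disjoint (E.filter fun e => e.1 = i) (E.filter fun e => e.2 = i) :=
    disjoint_filter.2 fun e he h₁ h₂ => hE e he (h₁.trans h₂.symm)
  rw [incident, filter_or, sum_union hdisj]

theorem sum_filter_fst_mem_add_sum_filter_snd_mem (E : Finset (V × V)) (P : Finset V)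
    (g : V × V → M) :
    ∑ e ∈ E with e.1 ∈ P, g e + ∑ e ∈ E with e.2 ∈ P, g e =
      ∑ e ∈ E1 E P, g e + 2 • ∑ e ∈ E2 E P, g e := by
  simp only [E1, E2, sum_filter, ← sum_nsmul, ← sum_add_distrib]
  refine sum_congr rfl fun e _ => ?_
  by_cases h₁ : e.1 ∈ P <;> by_cases h₂ : e.2 ∈ P <;> simp [h₁, h₂, two_nsmul]

theorem sum_sum_incident {E : Finset (V × V)} (hE : ∀ e ∈ E, e.1 ≠ e.2) (P : Finset V)
    (g : V × V → M) :
    ∑ i ∈ P, ∑ e ∈ incident E i, g e = ∑ e ∈ E1 E P, g e + 2 • ∑ e ∈ E2 E P, g e := by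
  simp only [sum_incident hE, sum_add_distrib, sum_fiberwise_eq_sum_filter,
    sum_filter_fst_mem_add_sum_filter_snd_mem]

theorem sum_E0_add_sum_E1_add_sum_E2 (E : Finset (V × V)) (P : Finset V) (g : V × V → M) :
    ∑ e ∈ E0 E P, g e + ∑ e ∈ E1 E P, g e + ∑ e ∈ E2 E P, g e = ∑ e ∈ E, g e := by
  simp only [E0, E1, E2, sum_filter, ← sum_add_distrib]
  refine sum_congr rfl fun e _ => ?_
  by_cases h₁ : e.1 ∈ P <;> by_cases h₂ : e.2 ∈ P <;> simp [h₁, h₂]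

theorem E0_eq_empty_iff {E : Finset (V × V)} {P : Finset V} : E0 E P = ∅ ↔ IsVC E P := by
  simp only [E0, filter_eq_empty_iff, IsVC, not_and_or, not_not]

theorem IsVC.sum_E1_add_sum_E2 {E : Finset (V × V)} {P : Finset V} (hP : IsVC E P)
    (g : V × V → M) : ∑ e ∈ E1 E P, g e + ∑ e ∈ E2 E P, g e = ∑ e ∈ E, g e := by
  rw [← sum_E0_add_sum_E1_add_sum_E2 E P g, E0_eq_empty_iff.2 hP, sum_empty, zero_add]

end EdgeSums

section Objective

variable {E : Finset (V × V)} {P Q : Finset V}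

theorem IsVC.vcObj_eq_sum_mwvcpWeight_add_mwvcpConst (hP : IsVC E P)
    (hE : ∀ e ∈ E, e.1 ≠ e.2) (c : V → ℝ) (q1 q2 : V × V → ℝ) :
    vcObj E c q1 q2 P = ∑ i ∈ P, mwvcpWeight E c q1 q2 i + mwvcpConst E q1 q2 := by
  have hweight : ∑ i ∈ P, mwvcpWeight E c q1 q2 i = ∑ i ∈ P, c i +
      (∑ e ∈ E1 E P, (q2 e - q1 e) + 2 • ∑ e ∈ E2 E P, (q2 e - q1 e)) := by
    simp only [mwvcpWeight, sum_add_distrib, sum_sum_incident hE]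
  have hconst : mwvcpConst E q1 q2 =
      ∑ e ∈ E1 E P, (2 * q1 e - q2 e) + ∑ e ∈ E2 E P, (2 * q1 e - q2 e) :=
    (hP.sum_E1_add_sum_E2 _).symm
  rw [hweight, hconst, vcObj]
  simp only [sum_sub_distrib, ← mul_sum]
  ring

theorem IsVC.vcObj_le_vcObj_iff (hP : IsVC E P) (hQ : IsVC E Q) (hE : ∀ e ∈ E, e.1 ≠ e.2)
    (c : V → ℝ) (q1 q2 : V × V → ℝ) :
    vcObj E c q1 q2 P ≤ vcObj E c q1 q2 Q ↔
      ∑ i ∈ P, mwvcpWeight E c q1 q2 i ≤ ∑ i ∈ Q, mwvcpWeight E c q1 q2 i := by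
  rw [hP.vcObj_eq_sum_mwvcpWeight_add_mwvcpConst hE,
    hQ.vcObj_eq_sum_mwvcpWeight_add_mwvcpConst hE, add_le_add_iff_right]

end Objective

theorem add_div_one_add_mul_add {F : Type*} [Field F] {x k δ : F} (hx : x ≠ 0)
    (hδ : δ = k / x) (hδ1 : 1 + δ ≠ 0) (ε : F) :
    (ε + δ) / (1 + δ) * (x + k) = ε * x + k := by
  obtain rfl : k = δ * x := (div_eq_iff hx).1 hδ.symm
  field_simp

theorem vcpnew_approx_from_mwvcp_approx_general
    (E : Finset (V × V)) (hsimple : ∀ e ∈ E, e.1 ≠ e.2)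
    (c : V → ℝ) (q1 q2 : V × V → ℝ)
    (w : V → ℝ) (hw : ∀ i, w i = c i + ∑ e ∈ incident E i, (q2 e - q1 e))
    (K : ℝ) (hK : K = ∑ e ∈ E, (2 * q1 e - q2 e))
    (P0 : Finset V) (hP0 : IsVC E P0)
    (hP0min : ∀ P : Finset V, IsVC E P → ∑ i ∈ P0, w i ≤ ∑ i ∈ P, w i)
    (hP0ne : ∑ i ∈ P0, w i ≠ 0)
    (δ : ℝ) (hδ : δ = K / ∑ i ∈ P0, w i) (hδ1 : 1 + δ ≠ 0)
    (Pstar : Finset V) (hPstar : IsVC E Pstar)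
    (ε : ℝ) (happrox : ∑ i ∈ Pstar, w i ≤ ε * ∑ i ∈ P0, w i) :
    vcObj E c q1 q2 Pstar ≤ (ε + δ) / (1 + δ) * vcObj E c q1 q2 P0 ∧
    (∀ P : Finset V, IsVC E P → vcObj E c q1 q2 P0 ≤ vcObj E c q1 q2 P) := by
  obtain rfl : w = mwvcpWeight E c q1 q2 := funext hw
  obtain rfl : K = mwvcpConst E q1 q2 := hK
  refine ⟨?_, fun P hP => (hP0.vcObj_le_vcObj_iff hP hsimple c q1 q2).2 (hP0min P hP)⟩
  calc
    vcObj E c q1 q2 Pstar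
      = ∑ i ∈ Pstar, mwvcpWeight E c q1 q2 i + mwvcpConst E q1 q2 :=
        hPstar.vcObj_eq_sum_mwvcpWeight_add_mwvcpConst hsimple c q1 q2
    _ ≤ ε * ∑ i ∈ P0, mwvcpWeight E c q1 q2 i + mwvcpConst E q1 q2 := by gcongr
    _ = (ε + δ) / (1 + δ) * (∑ i ∈ P0, mwvcpWeight E c q1 q2 i + mwvcpConst E q1 q2) :=
        (add_div_one_add_mul_add hP0ne hδ hδ1 ε).symm
    _ = (ε + δ) / (1 + δ) * vcObj E c q1 q2 P0 := by
        rw [hP0.vcObj_eq_sum_mwvcpWeight_add_mwvcpConst hsimple]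

end

/-- an `ε`-approximate vertex cover for the equivalent MWVCP is an
`(ε+δ)/(1+δ)`-approximate solution for VCPNEW. -/
theorem vcpnew_approx_from_mwvcp_approx
    (E : Finset (V × V))
    (hsimple : ∀ e ∈ E, e.1 ≠ e.2)
    (honce : ∀ e ∈ E, (e.2, e.1) ∉ E)
    (c : V → ℝ) (q1 q2 : V × V → ℝ)
    (w : V → ℝ) (hw : ∀ i, w i = c i + ∑ e ∈ incident E i, (q2 e - q1 e))
    (hwnonneg : ∀ i, 0 ≤ w i)
    (K : ℝ) (hK : K = ∑ e ∈ E, (2 * q1 e - q2 e)) (hKnonneg : 0 ≤ K)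
    (P0 : Finset V) (hP0 : IsVC E P0)
    (hP0min : ∀ P : Finset V, IsVC E P → ∑ i ∈ P0, w i ≤ ∑ i ∈ P, w i)
    (hP0pos : 0 < ∑ i ∈ P0, w i)
    (δ : ℝ) (hδ : δ = K / ∑ i ∈ P0, w i)
    (Pstar : Finset V) (hPstar : IsVC E Pstar)
    (ε : ℝ) (hε : 1 ≤ ε)
    (happrox : ∑ i ∈ Pstar, w i ≤ ε * ∑ i ∈ P0, w i) :
    vcObj E c q1 q2 Pstar ≤ (ε + δ) / (1 + δ) * vcObj E c q1 q2 P0 ∧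
    (∀ P : Finset V, IsVC E P → vcObj E c q1 q2 P0 ≤ vcObj E c q1 q2 P) := by
  have hδ1 : 0 < 1 + δ := by rw [hδ]; positivity
  exact vcpnew_approx_from_mwvcp_approx_general E hsimple c q1 q2 w hw K hK P0 hP0 hP0min
    hP0pos.ne' δ hδ hδ1.ne' Pstar hPstar ε happrox
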